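/- Dilworth's theorem: a finite partially ordered set P can be partitioned into m chains if and only if every antichain in P has cardinality at most m; equivalently the minimum number of chains in a chain partition equals the maximum cardinality of an antichain. -/

import Mathlib

lemma color_inj {P : Type*} [PartialOrder P] {S B : Finset P} {f : P → ℕ}
    (hf : ∀ x ∈ S, ∀ y ∈ S, f x = f y → x ≤ y ∨ y ≤ x)
    (hB : B ⊆ S) (hanti : IsAntichain (· ≤ ·) (B : Set P)) : Set.InjOn f (B : Set P) := by
  intro x hx y hy hxy
  rcases hf x (hB hx) y (hB hy) hxy with h | h
  · exact hanti.eq hx hy h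
  · exact (hanti.eq hy hx h).symm

lemma color_card {P : Type*} [PartialOrder P] {S B : Finset P} {f : P → ℕ} {k : ℕ}
    (hf : ∀ x ∈ S, ∀ y ∈ S, f x = f y → x ≤ y ∨ y ≤ x) (hk : ∀ x ∈ S, f x < k)
    (hB : B ⊆ S) (hanti : IsAntichain (· ≤ ·) (B : Set P)) : B.card ≤ k := by
  have := Finset.card_le_card_of_injOn (t := Finset.range k) f
    (fun x hx => by simpa using hk x (hB hx)) (color_inj hf hB hanti)
  simpa using this

lemma color_surj {P : Type*} [PartialOrder P] {S B : Finset P} {f : P → ℕ} {k : ℕ}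
    (hf : ∀ x ∈ S, ∀ y ∈ S, f x = f y → x ≤ y ∨ y ≤ x) (hk : ∀ x ∈ S, f x < k)
    (hB : B ⊆ S) (hanti : IsAntichain (· ≤ ·) (B : Set P)) (hc : B.card = k) (i : ℕ)
    (hi : i < k) : ∃ b ∈ B, f b = i := by
  classical
  have h1 : B.image f = Finset.range k := by
    apply Finset.eq_of_subset_of_card_le
    · intro y hy
      obtain ⟨x, hx, rfl⟩ := Finset.mem_image.1 hy
      simpa using hk x (hB hx)
    · rw [Finset.card_image_of_injOn (color_inj hf hB hanti)]
      simp [hc]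
  have : i ∈ B.image f := by rw [h1]; simpa using hi
  simpa using this

/-- Galvin's induction. -/
lemma galvin {P : Type*} [PartialOrder P] (S : Finset P) :
    ∃ (f : P → ℕ) (A : Finset P), A ⊆ S ∧ IsAntichain (· ≤ ·) (A : Set P) ∧
      (∀ x ∈ S, f x < A.card) ∧ ∀ x ∈ S, ∀ y ∈ S, f x = f y → x ≤ y ∨ y ≤ x := by
  classical
  induction S using Finset.strongInduction with
  | H S ih =>
  rcases S.eq_empty_or_nonempty with rfl | hne
  · exact ⟨fun _ => 0, ∅, by simp⟩
  obtain ⟨a, ha⟩ := S.exists_maximal hne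
  have haS := ha.1
  have hmax : ∀ y ∈ S, a ≤ y → y ≤ a := fun y hy h => ha.2 hy h
  obtain ⟨f, A0, hA0, hanti0, hlt, hf⟩ := ih (S.erase a) (Finset.erase_ssubset haS)
  set k := A0.card with hk
  have hT : ∀ i, ∃ x, i < k → (x ∈ S.erase a ∧ f x = i ∧
      (∃ B ⊆ S.erase a, IsAntichain (· ≤ ·) (B : Set P) ∧ B.card = k ∧ x ∈ B) ∧
      ∀ B ⊆ S.erase a, IsAntichain (· ≤ ·) (B : Set P) → B.card = k → ∀ y ∈ B, f y = i →
        y ≤ x) := by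
    intro i
    by_cases hi : i < k
    swap
    · exact ⟨a, fun h => absurd h hi⟩
    let T := (S.erase a).filter (fun x => f x = i ∧
      ∃ B ⊆ S.erase a, IsAntichain (· ≤ ·) (B : Set P) ∧ B.card = k ∧ x ∈ B)
    have hTne : T.Nonempty := by
      obtain ⟨b, hb, hbi⟩ := color_surj hf hlt hA0 hanti0 rfl i hi
      exact ⟨b, Finset.mem_filter.2 ⟨hA0 hb, hbi, A0, hA0, hanti0, rfl, hb⟩⟩
    obtain ⟨x, hx⟩ := T.exists_maximal hTne
    obtain ⟨hxS, hxi, hxB⟩ := Finset.mem_filter.1 hx.1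
    refine ⟨x, fun _ => ⟨hxS, hxi, hxB, ?_⟩⟩
    intro B hB hBa hBc y hy hyi
    have hyT : y ∈ T := Finset.mem_filter.2 ⟨hB hy, hyi, B, hB, hBa, hBc, hy⟩
    rcases hf x hxS y (hB hy) (hxi.trans hyi.symm) with h | h
    · exact hx.2 hyT h
    · exact h
  choose x hx using hT
  by_cases hcase : ∃ i < k, x i ≤ a
  · obtain ⟨i, hi, hia⟩ := hcase
    obtain ⟨hxS, hxi, -, hxmax⟩ := hx i hi
    let S2 := S.filter (fun z => ¬ (z = a ∨ (f z = i ∧ z ≤ x i)))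
    have hS2 : ∀ z, z ∈ S2 ↔ z ∈ S ∧ ¬ (z = a ∨ (f z = i ∧ z ≤ x i)) := fun z =>
      Finset.mem_filter
    have hS2e : S2 ⊆ S.erase a := by
      intro z hz
      have := (hS2 z).1 hz
      exact Finset.mem_erase.2 ⟨fun h => this.2 (Or.inl h), this.1⟩
    obtain ⟨g, A2, hA2, hanti2, hlt2, hg⟩ :=
      ih S2 (lt_of_le_of_lt hS2e (Finset.erase_ssubset haS))
    have hA2e := hA2.trans hS2e
    have hle : A2.card ≤ k := color_card hf hlt hA2e hanti2
    have hneq : A2.card ≠ k := by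
      intro hc
      obtain ⟨b, hb, hbi⟩ := color_surj hf hlt hA2e hanti2 hc i hi
      exact ((hS2 b).1 (hA2 hb)).2 (Or.inr ⟨hbi, hxmax A2 hA2e hanti2 hc b hb hbi⟩)
    refine ⟨fun z => if z ∈ S2 then g z else k - 1, A0,
      hA0.trans (Finset.erase_subset _ _), hanti0, ?_, ?_⟩
    · intro z hz
      by_cases h : z ∈ S2
      · have := hlt2 z h
        simp only [h, if_true]; omega
      · simp only [h, if_false]; omega
    · intro y hy z hz hyz
      by_cases h1 : y ∈ S2 <;> by_cases h2 : z ∈ S2 <;>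
        simp only [h1, h2, if_true, if_false] at hyz
      · exact hg y h1 z h2 hyz
      · have := hlt2 y h1
        omega
      · have := hlt2 z h2
        omega
      · have h1' : y = a ∨ (f y = i ∧ y ≤ x i) := by
          by_contra h; exact h1 ((hS2 y).2 ⟨hy, h⟩)
        have h2' : z = a ∨ (f z = i ∧ z ≤ x i) := by
          by_contra h; exact h2 ((hS2 z).2 ⟨hz, h⟩)
        by_cases hya : y = a
        · rcases h2' with h | h
          · left; rw [hya, h]
          · right; rw [hya]; exact h.2.trans hia
        · by_cases hza : z = a
          · have h := h1'.resolve_left hya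
            left; rw [hza]; exact h.2.trans hia
          · have h := h1'.resolve_left hya
            have h' := h2'.resolve_left hza
            exact hf y (Finset.mem_erase.2 ⟨hya, hy⟩) z (Finset.mem_erase.2 ⟨hza, hz⟩)
              (h.1.trans h'.1.symm)
  · push Not at hcase
    have hxanti : ∀ i < k, ∀ j < k, x i ≤ x j → i = j := by
      intro i hi j hj hij
      obtain ⟨-, hxj, ⟨B, hB, hBa, hBc, hxB⟩, -⟩ := hx j hj
      obtain ⟨y, hy, hyi⟩ := color_surj hf hlt hB hBa hBc i hi
      have hyx := (hx i hi).2.2.2 B hB hBa hBc y hy hyi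
      have : y = x j := hBa.eq hy hxB (hyx.trans hij)
      rw [← hyi, this, hxj]
    have haA : a ∉ (Finset.range k).image x := by
      intro h
      obtain ⟨i, hi, hia⟩ := Finset.mem_image.1 h
      exact hcase i (by simpa using hi) hia.le
    have hcard : (insert a ((Finset.range k).image x)).card = k + 1 := by
      rw [Finset.card_insert_of_notMem haA, Finset.card_image_of_injOn]
      · simp
      · intro i hi j hj hij
        exact hxanti i (by simpa using hi) j (by simpa using hj) hij.le
    refine ⟨fun z => if z = a then k else f z, insert a ((Finset.range k).image x), ?_, ?_, ?_, ?_⟩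
    · intro z hz
      rcases Finset.mem_insert.1 hz with rfl | hz
      · exact haS
      · obtain ⟨i, hi, rfl⟩ := Finset.mem_image.1 hz
        exact Finset.mem_of_mem_erase (hx i (by simpa using hi)).1
    · intro y hy z hz hne hle
      rcases Finset.mem_insert.1 hy with rfl | hy2 <;>
        rcases Finset.mem_insert.1 hz with rfl | hz2
      · exact hne rfl
      · obtain ⟨i, hi, rfl⟩ := Finset.mem_image.1 hz2
        have hi' : i < k := by simpa using hi
        exact hcase i hi' (hmax _ (Finset.mem_of_mem_erase (hx i hi').1) hle)
      · obtain ⟨i, hi, rfl⟩ := Finset.mem_image.1 hy2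
        exact hcase i (by simpa using hi) hle
      · obtain ⟨i, hi, rfl⟩ := Finset.mem_image.1 hy2
        obtain ⟨j, hj, rfl⟩ := Finset.mem_image.1 hz2
        exact hne (congrArg x (hxanti i (by simpa using hi) j (by simpa using hj) hle))
    · intro z hz
      rw [hcard]
      by_cases h : z = a
      · simp [h]
      · have := hlt z (Finset.mem_erase.2 ⟨h, hz⟩)
        simp only [h, if_false]; omega
    · intro y hy z hz hyz
      by_cases h1 : y = a <;> by_cases h2 : z = a <;>
        simp only [h1, h2, if_true, if_false] at hyz
      · left; rw [h1, h2]
      · have := hlt z (Finset.mem_erase.2 ⟨h2, hz⟩)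
        omega
      · have := hlt y (Finset.mem_erase.2 ⟨h1, hy⟩)
        omega
      · exact hf y (Finset.mem_erase.2 ⟨h1, hy⟩) z (Finset.mem_erase.2 ⟨h2, hz⟩) hyz

/-- Dilworth's theorem: a finite poset can be partitioned into `m` chains
(given by the fibers of a coloring `f : P → Fin m`) iff every antichain has
cardinality at most `m`; hence the minimum number of chains in a chain
partition equals the maximum cardinality of an antichain. -/
theorem dilworth {P : Type*} [Fintype P] [PartialOrder P] :
    (∀ m : ℕ,
      (∃ f : P → Fin m, ∀ p q : P, f p = f q → p ≤ q ∨ q ≤ p) ↔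
        ∀ a : Finset P, IsAntichain (· ≤ ·) (a : Set P) → a.card ≤ m) ∧
    IsLeast {m : ℕ | ∃ f : P → Fin m, ∀ p q : P, f p = f q → p ≤ q ∨ q ≤ p}
      (sSup {n : ℕ | ∃ a : Finset P, IsAntichain (· ≤ ·) (a : Set P) ∧ a.card = n}) := by
  classical
  have main : ∀ m : ℕ,
      (∃ f : P → Fin m, ∀ p q : P, f p = f q → p ≤ q ∨ q ≤ p) ↔
        ∀ a : Finset P, IsAntichain (· ≤ ·) (a : Set P) → a.card ≤ m := by
    intro m
    constructor
    · rintro ⟨f, hf⟩ a ha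
      exact color_card (S := Finset.univ) (f := fun p => (f p : ℕ))
        (fun p _ q _ h => hf p q (Fin.ext h)) (fun p _ => (f p).2) (Finset.subset_univ _) ha
    · intro h
      obtain ⟨f, A, -, hA, hlt, hf⟩ := galvin (Finset.univ : Finset P)
      refine ⟨fun p => ⟨f p, (hlt p (Finset.mem_univ _)).trans_le (h A hA)⟩, fun p q hpq => ?_⟩
      exact hf p (Finset.mem_univ _) q (Finset.mem_univ _) (Fin.mk.inj_iff.1 hpq)
  refine ⟨main, ?_, ?_⟩
  · refine (main _).2 fun a ha => le_csSup ⟨Fintype.card P, ?_⟩ ⟨a, ha, rfl⟩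
    rintro n ⟨b, -, rfl⟩
    exact Finset.card_le_univ b
  · intro m hm
    refine csSup_le ⟨0, ∅, by simp, rfl⟩ ?_
    rintro n ⟨b, hb, rfl⟩
    exact (main m).1 hm b hb
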